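/- Let G = (V, E) be a finite simple undirected graph and let x : E → {0, 1}. Suppose that (i) for every triangle of G, i.e., for all pairwise distinct i, j, k ∈ V with (i, j), (j, k), (i, k) ∈ E, the triangle inequalities x_{ij} + x_{jk} − x_{ik} ≤ 1, x_{ij} − x_{jk} + x_{ik} ≤ 1 and −x_{ij} + x_{jk} + x_{ik} ≤ 1 hold; and (ii) for all pairwise distinct i, j, k ∈ V with (i, k), (j, k) ∈ E and (i, j) ∉ E, x_{ik} + x_{jk} ≤ 1 holds. Then the relation on V defined by i ∼ j ⟺ (i = j or ((i, j) ∈ E and x_{ij} = 1)) is an equivalence relation, and every equivalence class of ∼ is a clique of G all of whose internal edges e satisfy x_e = 1. Consequently, the integral feasible solutions of formulation F1s are exactly the clique partitions of G. -/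

import Mathlib

/-- Integral feasible solutions of formulation F1s are exactly the clique partitions:
if a symmetric binary assignment `x` on the edges of `G` satisfies the triangle
inequalities on triangles of `G` and `x i k + x j k ≤ 1` whenever `(i,k), (j,k)` are
edges but `(i,j)` is not, then `i ∼ j ↔ (i = j ∨ (Adj i j ∧ x i j = 1))` is an
equivalence relation, and each equivalence class is a clique all of whose internal
edges carry `x = 1`. -/
theorem F1s_feasible_iff_clique_partition {V : Type*} [Fintype V] [DecidableEq V]
    (G : SimpleGraph V) [DecidableRel G.Adj]
    (x : V → V → ℕ)
    (hsymm : ∀ i j : V, x i j = x j i)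
    (hbin : ∀ i j : V, x i j = 0 ∨ x i j = 1)
    (htri₁ : ∀ i j k : V, i ≠ j → j ≠ k → i ≠ k →
      G.Adj i j → G.Adj j k → G.Adj i k → x i j + x j k ≤ 1 + x i k)
    (htri₂ : ∀ i j k : V, i ≠ j → j ≠ k → i ≠ k →
      G.Adj i j → G.Adj j k → G.Adj i k → x i j + x i k ≤ 1 + x j k)
    (htri₃ : ∀ i j k : V, i ≠ j → j ≠ k → i ≠ k →
      G.Adj i j → G.Adj j k → G.Adj i k → x j k + x i k ≤ 1 + x i j)
    (hmiss : ∀ i j k : V, i ≠ j → j ≠ k → i ≠ k →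
      G.Adj i k → G.Adj j k → ¬ G.Adj i j → x i k + x j k ≤ 1) :
    Equivalence (fun i j : V => i = j ∨ (G.Adj i j ∧ x i j = 1)) ∧
    (∀ i j l : V, (i = j ∨ (G.Adj i j ∧ x i j = 1)) → (i = l ∨ (G.Adj i l ∧ x i l = 1)) →
      j ≠ l → G.Adj j l ∧ x j l = 1) := by
  have key : ∀ i j l : V, G.Adj i j → x i j = 1 → G.Adj i l → x i l = 1 → j ≠ l →
      G.Adj j l ∧ x j l = 1 := by
    intro i j l hij h1 hil h2 hjl
    have hadj : G.Adj j l := by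
      by_contra hn
      have h := hmiss j l i hjl hil.ne.symm hij.ne.symm hij.symm hil.symm hn
      have e1 := hsymm j i
      have e2 := hsymm l i
      omega
    have h := htri₂ i j l hij.ne hjl hil.ne hij hadj hil
    have hb := hbin j l
    exact ⟨hadj, by omega⟩
  refine ⟨⟨fun i => Or.inl rfl, ?_, ?_⟩, ?_⟩
  · rintro i j (h | ⟨h, h1⟩)
    · exact Or.inl h.symm
    · exact Or.inr ⟨h.symm, (hsymm j i).trans h1⟩
  · rintro i j k (rfl | ⟨h, h1⟩) (rfl | ⟨h', h2⟩)
    · exact Or.inl rfl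
    · exact Or.inr ⟨h', h2⟩
    · exact Or.inr ⟨h, h1⟩
    · by_cases hik : i = k
      · exact Or.inl hik
      · exact Or.inr (key j i k h.symm ((hsymm j i).trans h1) h' h2 hik)
  · rintro i j l (rfl | ⟨h, h1⟩) (rfl | ⟨h', h2⟩) hne
    · exact absurd rfl hne
    · exact ⟨h', h2⟩
    · exact ⟨h.symm, (hsymm j i).trans h1⟩
    · exact key i j l h h1 h' h2 hne
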